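/- arXiv:2208.11414 — 8 statements merged into one kernel-verified Lean document; each statement's English description precedes it below -/
import Mathlib

section
/- Let G be a finite simple undirected graph with an st-orientation for distinct vertices s and t, and let (v_1, v_2, ..., v_k) be a path in G such that every internal vertex v_2, ..., v_{k-1} has degree 2 in G and is distinct from s and t. Then the edges of the path are oriented consistently: either every edge {v_i, v_{i+1}} (for i = 1, ..., k-1) is directed from v_i to v_{i+1}, or every such edge is directed from v_{i+1} to v_i. -/
variable {V : Type*}

/-- `D` is an orientation of `G`: every directed edge lies on an edge of `G`,
and every edge of `G` receives exactly one of the two possible directions. -/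
def IsOrientation (G : SimpleGraph V) (D : V → V → Prop) : Prop :=
  (∀ u v, D u v → G.Adj u v) ∧ ∀ u v, G.Adj u v → (D u v ↔ ¬ D v u)

/-- A digraph is acyclic if it has no directed cycle. -/
def DigraphAcyclic (D : V → V → Prop) : Prop :=
  ∀ v, ¬ Relation.TransGen D v v

/-- An st-orientation: an acyclic orientation with unique source `s` and unique sink `t`. -/
def IsSTOrientation (G : SimpleGraph V) (D : V → V → Prop) (s t : V) : Prop :=
  IsOrientation G D ∧ DigraphAcyclic D ∧
    (∀ u, ¬ D u s) ∧ (∀ v, (∀ u, ¬ D u v) → v = s) ∧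
    (∀ u, ¬ D t u) ∧ (∀ v, (∀ u, ¬ D v u) → v = t)

/-- A directed edge `(u,v)` is transitive if there is a directed path from `u` to `v`
of length at least 2. -/
def TransEdge (D : V → V → Prop) (u v : V) : Prop :=
  D u v ∧ ∃ w, D u w ∧ Relation.TransGen D w v

/-- A non-transitive st-orientation: an st-orientation with no transitive edge. -/
def IsNonTransSTOrientation (G : SimpleGraph V) (D : V → V → Prop) (s t : V) : Prop :=
  IsSTOrientation G D s t ∧ ∀ u v, ¬ TransEdge D u v

/-- In any st-orientation, a path whose internal vertices have degree 2 and avoid `s` and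
`t` is oriented consistently: either all its edges are directed forward, or all backward. -/
theorem stmt0 {V : Type*} [Fintype V] [DecidableEq V]
    (G : SimpleGraph V) [DecidableRel G.Adj] (s t : V) (hst : s ≠ t)
    (D : V → V → Prop) (hD : IsSTOrientation G D s t)
    (k : ℕ) (p : ℕ → V)
    (hinj : ∀ i j, i < k → j < k → p i = p j → i = j)
    (hadj : ∀ i, i + 1 < k → G.Adj (p i) (p (i + 1)))
    (hinternal : ∀ i, 0 < i → i + 1 < k →
      G.degree (p i) = 2 ∧ p i ≠ s ∧ p i ≠ t) :
    (∀ i, i + 1 < k → D (p i) (p (i + 1))) ∨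
    (∀ i, i + 1 < k → D (p (i + 1)) (p i)) := by
  obtain ⟨⟨h1, h2⟩, _, _, hsrc, _, hsnk⟩ := hD
  have nb : ∀ i, i + 2 < k → ∀ w, G.Adj (p (i+1)) w → w = p i ∨ w = p (i+2) := by
    intro i hi w hw
    have hd := (hinternal (i+1) (by omega) (by omega)).1
    have hne : p i ≠ p (i+2) := fun h => by
      have := hinj i (i+2) (by omega) hi h
      omega
    have hsub : ({p i, p (i+2)} : Finset V) ⊆ G.neighborFinset (p (i+1)) := by
      intro x hx
      simp only [Finset.mem_insert, Finset.mem_singleton] at hx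
      rw [SimpleGraph.mem_neighborFinset]
      rcases hx with rfl | rfl
      · exact (hadj i (by omega)).symm
      · exact hadj (i+1) hi
    have heq := Finset.eq_of_subset_of_card_le hsub (by
      rw [SimpleGraph.card_neighborFinset_eq_degree, hd, Finset.card_pair hne])
    have hm : w ∈ G.neighborFinset (p (i+1)) := by
      rwa [SimpleGraph.mem_neighborFinset]
    rw [← heq] at hm
    simpa using hm
  have step : ∀ i, i + 2 < k → (D (p i) (p (i+1)) ↔ D (p (i+1)) (p (i+2))) := by
    intro i hi
    obtain ⟨_, hs, ht⟩ := hinternal (i+1) (by omega) (by omega)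
    have a1 := h2 _ _ (hadj i (by omega))
    have a2 := h2 _ _ (hadj (i+1) hi)
    constructor
    · intro h
      by_contra hc
      refine ht (hsnk _ fun u hu => ?_)
      rcases nb i hi u (h1 _ _ hu) with rfl | rfl
      · exact a1.1 h hu
      · exact hc hu
    · intro h
      by_contra hc
      refine hs (hsrc _ fun u hu => ?_)
      rcases nb i hi u (h1 _ _ hu).symm with rfl | rfl
      · exact hc hu
      · exact a2.1 h hu
  have all : ∀ i, i + 1 < k → (D (p 0) (p 1) ↔ D (p i) (p (i+1))) := by
    intro i
    induction i with
    | zero => intro _; exact Iff.rfl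
    | succ n ih => intro hn; exact (ih (by omega)).trans (step n hn)
  by_cases h0 : D (p 0) (p 1)
  · exact Or.inl fun i hi => (all i hi).1 h0
  · refine Or.inr fun i hi => ?_
    by_contra hc
    exact h0 ((all i hi).2 ((h2 _ _ (hadj i hi)).2 hc))
end

section
/- Let G be a finite simple undirected graph containing a fork gadget F none of whose six vertices is s or t. In any non-transitive st-orientation of G, the boundary edges e9 and e10 of F are either both oriented exiting F or both oriented entering F; moreover, they are oriented exiting F if and only if the boundary edge e1 is oriented entering F. -/
variable {V : Type*}

/-- A fork gadget in `G`: six vertices `v, m1, m2, x, w, z` with the prescribed internal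
edges, three boundary edges `e1 = {a,v}`, `e9 = {w,b}`, `e10 = {z,c}` to outside vertices
`a, b, c`, and no other incident edges at the six fork vertices. -/
structure ForkGadget (G : SimpleGraph V) where
  a : V
  v : V
  m1 : V
  m2 : V
  x : V
  w : V
  z : V
  b : V
  c : V
  distinct : List.Pairwise (· ≠ ·) [v, m1, m2, x, w, z]
  a_outside : a ∉ [v, m1, m2, x, w, z]
  b_outside : b ∉ [v, m1, m2, x, w, z]
  c_outside : c ∉ [v, m1, m2, x, w, z]
  nbr_v : ∀ u, G.Adj v u ↔ u = a ∨ u = m1 ∨ u = x ∨ u = m2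
  nbr_m1 : ∀ u, G.Adj m1 u ↔ u = v ∨ u = w
  nbr_m2 : ∀ u, G.Adj m2 u ↔ u = v ∨ u = z
  nbr_x : ∀ u, G.Adj x u ↔ u = v ∨ u = w ∨ u = z
  nbr_w : ∀ u, G.Adj w u ↔ u = m1 ∨ u = x ∨ u = b
  nbr_z : ∀ u, G.Adj z u ↔ u = m2 ∨ u = x ∨ u = c

/-- In any non-transitive st-orientation of a graph containing a fork gadget avoiding
`s` and `t`, the boundary edges `e9` and `e10` are both exiting or both entering the
gadget, and they exit if and only if `e1` enters. -/
theorem stmt3 {V : Type*} (G : SimpleGraph V) (s t : V) (hst : s ≠ t)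
    (D : V → V → Prop) (hD : IsNonTransSTOrientation G D s t)
    (F : ForkGadget G)
    (hnost : ∀ u, u ∈ [F.v, F.m1, F.m2, F.x, F.w, F.z] → u ≠ s ∧ u ≠ t) :
    ((D F.w F.b ∧ D F.z F.c) ∨ (D F.b F.w ∧ D F.c F.z)) ∧
    ((D F.w F.b ∧ D F.z F.c) ↔ D F.a F.v) := by
  obtain ⟨⟨⟨hA, hO⟩, hac, -, hsrc, -, hsnk⟩, hnt⟩ := hD
  have path : ∀ p q r u, D p q → D q r → D r u → ¬ D p u ∧ ¬ D u p := by
    intro p q r u h1 h2 h3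
    have h : Relation.TransGen D q u := (Relation.TransGen.single h2).tail h3
    exact ⟨fun h4 => hnt p u ⟨h4, q, h1, h⟩, fun h4 => hac p ((h.head h1).tail h4)⟩
  have inn : ∀ y, y ≠ s → ∃ u, G.Adj y u ∧ D u y := by
    intro y hy
    by_contra hc
    push Not at hc
    exact hy (hsrc y fun u hu => hc u (hA _ _ hu).symm hu)
  have out : ∀ y, y ≠ t → ∃ u, G.Adj y u ∧ D y u := by
    intro y hy
    by_contra hc
    push Not at hc
    exact hy (hsnk y fun u hu => hc u (hA _ _ hu) hu)
  have iv := inn F.v (hnost _ (by simp)).1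
  have ov := out F.v (hnost _ (by simp)).2
  have i1 := inn F.m1 (hnost _ (by simp)).1
  have o1 := out F.m1 (hnost _ (by simp)).2
  have i2 := inn F.m2 (hnost _ (by simp)).1
  have o2 := out F.m2 (hnost _ (by simp)).2
  have iw := inn F.w (hnost _ (by simp)).1
  have ow := out F.w (hnost _ (by simp)).2
  have iz := inn F.z (hnost _ (by simp)).1
  have oz := out F.z (hnost _ (by simp)).2
  have ea := hO F.v F.a (by simp [F.nbr_v])
  have e2 := hO F.v F.m1 (by simp [F.nbr_v])
  have e3 := hO F.v F.x (by simp [F.nbr_v])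
  have e4 := hO F.v F.m2 (by simp [F.nbr_v])
  have e5 := hO F.m1 F.w (by simp [F.nbr_m1])
  have e6 := hO F.x F.w (by simp [F.nbr_x])
  have e7 := hO F.x F.z (by simp [F.nbr_x])
  have e8 := hO F.m2 F.z (by simp [F.nbr_m2])
  have e9 := hO F.w F.b (by simp [F.nbr_w])
  have e10 := hO F.z F.c (by simp [F.nbr_z])
  simp only [F.nbr_v, F.nbr_m1, F.nbr_m2, F.nbr_w, F.nbr_z, or_and_right, exists_or,
    exists_eq_left] at iv ov i1 o1 i2 o2 iw ow iz oz
  have p1 := path F.v F.m1 F.w F.x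
  have p2 := path F.x F.v F.m1 F.w
  have p3 := path F.w F.m1 F.v F.x
  have p4 := path F.x F.w F.m1 F.v
  have q1 := path F.v F.m2 F.z F.x
  have q2 := path F.x F.v F.m2 F.z
  have q3 := path F.z F.m2 F.v F.x
  have q4 := path F.x F.z F.m2 F.v
  clear path inn out hnt hac hsrc hsnk hA hO hnost
  by_cases h2 : D F.v F.m1 <;> by_cases h4 : D F.v F.m2 <;> by_cases h3 : D F.v F.x <;>
    by_cases h6 : D F.x F.w <;> by_cases h7 : D F.x F.z <;> grind
end

section
/- Let G be a finite simple undirected graph containing a fork gadget F none of whose six vertices is s or t. In any non-transitive st-orientation of G in which the boundary edge e1 is oriented entering F (directed from a to v), the orientation of every edge of F is forced: e2 is directed from v to m1, e5 from m1 to w, e3 from v to x, e6 from x to w, e4 from v to m2, e8 from m2 to z, e7 from x to z, e9 from w to b, and e10 from z to c. -/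
variable {V : Type*}

theorem fork_square {V : Type*} (D : V → V → Prop) (v m w x : V)
    (hac : DigraphAcyclic D) (hnt : ∀ u v, ¬ TransEdge D u v)
    (hm : (D v m ∧ D m w) ∨ (D w m ∧ D m v))
    (hvx : D v x ∨ D x v) (hxw : D x w ∨ D w x) :
    (D v m ∧ D m w ∧ D v x ∧ D x w) ∨ (D m v ∧ D x v) := by
  have tr : ∀ p q r y, D p q → D q r → D r y → ¬ D p y := fun p q r y h1 h2 h3 h4 =>
    hnt p y ⟨h4, q, h1, (Relation.TransGen.single h2).tail h3⟩
  have cy : ∀ p q r y, D p q → D q r → D r y → ¬ D y p := fun p q r y h1 h2 h3 h4 =>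
    hac p ((((Relation.TransGen.single h1).tail h2).tail h3).tail h4)
  rcases hm with ⟨h1, h2⟩ | ⟨h1, h2⟩ <;> rcases hvx with h3 | h3
  · rcases hxw with h4 | h4
    · exact Or.inl ⟨h1, h2, h3, h4⟩
    · exact absurd h3 (tr _ _ _ _ h1 h2 h4)
  · rcases hxw with h4 | h4
    · exact absurd h4 (tr _ _ _ _ h3 h1 h2)
    · exact absurd h3 (cy _ _ _ _ h1 h2 h4)
  · rcases hxw with h4 | h4
    · exact absurd h4 (cy _ _ _ _ h1 h2 h3)
    · exact absurd h4 (tr _ _ _ _ h1 h2 h3)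
  · exact Or.inr ⟨h2, h3⟩

/-- In any non-transitive st-orientation of a graph containing a fork gadget avoiding
`s` and `t`, if the boundary edge `e1` enters the gadget, then the orientation of every
edge of the gadget is forced. -/
theorem stmt4 {V : Type*} (G : SimpleGraph V) (s t : V) (hst : s ≠ t)
    (D : V → V → Prop) (hD : IsNonTransSTOrientation G D s t)
    (F : ForkGadget G)
    (hnost : ∀ u, u ∈ [F.v, F.m1, F.m2, F.x, F.w, F.z] → u ≠ s ∧ u ≠ t)
    (he1 : D F.a F.v) :
    D F.v F.m1 ∧ D F.m1 F.w ∧ D F.v F.x ∧ D F.x F.w ∧ D F.v F.m2 ∧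
    D F.m2 F.z ∧ D F.x F.z ∧ D F.w F.b ∧ D F.z F.c := by
  obtain ⟨⟨⟨hadj, hor⟩, hac, -, hsrc, -, hsnk⟩, hnt⟩ := hD
  have as : ∀ p q, D p q → ¬ D q p := fun p q h => (hor p q (hadj p q h)).1 h
  have tot : ∀ p q, G.Adj p q → D p q ∨ D q p := fun p q h => by
    have := hor p q h
    tauto
  have hin : ∀ u, u ∈ [F.v, F.m1, F.m2, F.x, F.w, F.z] → ∃ y, G.Adj u y ∧ D y u := by
    intro u hu
    by_contra! h
    exact (hnost u hu).1 (hsrc u fun y hy => h y (hadj _ _ hy).symm hy)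
  have hout : ∀ u, u ∈ [F.v, F.m1, F.m2, F.x, F.w, F.z] → ∃ y, G.Adj u y ∧ D u y := by
    intro u hu
    by_contra! h
    exact (hnost u hu).2 (hsnk u fun y hy => h y (hadj _ _ hy) hy)
  have hm1 : (D F.v F.m1 ∧ D F.m1 F.w) ∨ (D F.w F.m1 ∧ D F.m1 F.v) := by
    obtain ⟨y, hy, h1⟩ := hin F.m1 (by simp)
    obtain ⟨y', hy', h2⟩ := hout F.m1 (by simp)
    rcases (F.nbr_m1 y).1 hy with rfl | rfl <;> rcases (F.nbr_m1 y').1 hy' with rfl | rfl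
    · exact absurd h1 (as _ _ h2)
    · exact Or.inl ⟨h1, h2⟩
    · exact Or.inr ⟨h1, h2⟩
    · exact absurd h1 (as _ _ h2)
  have hm2 : (D F.v F.m2 ∧ D F.m2 F.z) ∨ (D F.z F.m2 ∧ D F.m2 F.v) := by
    obtain ⟨y, hy, h1⟩ := hin F.m2 (by simp)
    obtain ⟨y', hy', h2⟩ := hout F.m2 (by simp)
    rcases (F.nbr_m2 y).1 hy with rfl | rfl <;> rcases (F.nbr_m2 y').1 hy' with rfl | rfl
    · exact absurd h1 (as _ _ h2)
    · exact Or.inl ⟨h1, h2⟩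
    · exact Or.inr ⟨h1, h2⟩
    · exact absurd h1 (as _ _ h2)
  have hvx := tot F.v F.x ((F.nbr_v _).2 (by simp))
  have hxw := tot F.x F.w ((F.nbr_x _).2 (by simp))
  have hxz := tot F.x F.z ((F.nbr_x _).2 (by simp))
  rcases fork_square D _ _ _ _ hac hnt hm1 hvx hxw with ⟨a1, a2, a3, a4⟩ | ⟨a1, a2⟩ <;>
    rcases fork_square D _ _ _ _ hac hnt hm2 hvx hxz with ⟨b1, b2, b3, b4⟩ | ⟨b1, b2⟩
  · refine ⟨a1, a2, a3, a4, b1, b2, b4, ?_, ?_⟩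
    · obtain ⟨y, hy, h⟩ := hout F.w (by simp)
      rcases (F.nbr_w y).1 hy with rfl | rfl | rfl
      · exact absurd h (as _ _ a2)
      · exact absurd h (as _ _ a4)
      · exact h
    · obtain ⟨y, hy, h⟩ := hout F.z (by simp)
      rcases (F.nbr_z y).1 hy with rfl | rfl | rfl
      · exact absurd h (as _ _ b2)
      · exact absurd h (as _ _ b4)
      · exact h
  · exact absurd b2 (as _ _ a3)
  · exact absurd a2 (as _ _ b3)
  · exfalso
    obtain ⟨y, hy, h⟩ := hout F.v (by simp)
    rcases (F.nbr_v y).1 hy with rfl | rfl | rfl | rfl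
    · exact as _ _ h he1
    · exact as _ _ h a1
    · exact as _ _ h a2
    · exact as _ _ h b1
end

section
/- The digraph on the nine vertices a, v, m1, m2, x, w, z, b, c with exactly the directed edges (a,v), (v,m1), (m1,w), (v,x), (x,w), (v,m2), (m2,z), (x,z), (w,b), (z,c) — that is, the fork gadget with boundary edge e1 entering and all edges carrying the forced orientation — is acyclic and contains no transitive edge. -/
variable {V : Type*}

/-- The directed edges of the fork gadget with `e1` entering, under the forced
orientation. Vertices: `a=0, v=1, m1=2, m2=3, x=4, w=5, z=6, b=7, c=8`. -/
def forkForcedD (u v : Fin 9) : Prop :=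
  (u, v) ∈ ([(0, 1), (1, 2), (2, 5), (1, 4), (4, 5), (1, 3), (3, 6), (4, 6),
             (5, 7), (6, 8)] : List (Fin 9 × Fin 9))

def forkLevel : Fin 9 → ℕ := ![0, 1, 2, 2, 2, 3, 3, 4, 4]

theorem forkLevel_step : ∀ u v : Fin 9, forkForcedD u v → forkLevel v = forkLevel u + 1 := by
  unfold forkForcedD
  decide

theorem forkLevel_lt {u v : Fin 9} (h : Relation.TransGen forkForcedD u v) :
    forkLevel u < forkLevel v := by
  induction h with
  | single h => have := forkLevel_step _ _ h; omega
  | tail _ h ih => have := forkLevel_step _ _ h; omega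

/-- The fork gadget with boundary edge `e1` entering and all edges carrying the forced
orientation is acyclic and contains no transitive edge. -/
theorem stmt5 : DigraphAcyclic forkForcedD ∧ ∀ u v, ¬ TransEdge forkForcedD u v := by
  refine ⟨fun v h => lt_irrefl _ (forkLevel_lt h), ?_⟩
  rintro u v ⟨h, w, h1, h2⟩
  have e1 := forkLevel_step _ _ h
  have e2 := forkLevel_step _ _ h1
  have e3 := forkLevel_lt h2
  omega
end

section
/- Let G be a finite simple undirected graph containing a fork gadget F none of whose six vertices is s or t, and consider a non-transitive st-orientation of G in which the boundary edge e1 is oriented entering F (directed from a to v) and the boundary edge e9 is oriented exiting F (directed from w to b). Then the edges e3 and e6 are directed from v to x and from x to w, respectively, if and only if the edges e2 and e5 are directed from v to m1 and from m1 to w, respectively. -/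
variable {V : Type*}

/-- In a non-transitive st-orientation of a graph containing a fork gadget avoiding `s`
and `t`, with `e1` entering and `e9` exiting the gadget, the path `v → x → w` is directed
forward if and only if the path `v → m1 → w` is directed forward. -/
theorem stmt6 {V : Type*} (G : SimpleGraph V) (s t : V) (hst : s ≠ t)
    (D : V → V → Prop) (hD : IsNonTransSTOrientation G D s t)
    (F : ForkGadget G)
    (hnost : ∀ u, u ∈ [F.v, F.m1, F.m2, F.x, F.w, F.z] → u ≠ s ∧ u ≠ t)
    (he1 : D F.a F.v) (he9 : D F.w F.b) :
    (D F.v F.x ∧ D F.x F.w) ↔ (D F.v F.m1 ∧ D F.m1 F.w) := by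
  obtain ⟨⟨⟨hadj, hor⟩, hac, -, hsrc, -, hsnk⟩, hnt⟩ := hD
  have T : ∀ {p q}, D p q → Relation.TransGen D p q := fun h => Relation.TransGen.single h
  have avx : G.Adj F.v F.x := (F.nbr_v _).2 (by simp)
  have axw : G.Adj F.x F.w := (F.nbr_x _).2 (by simp)
  have am1v : G.Adj F.m1 F.v := (F.nbr_m1 _).2 (by simp)
  have am1w : G.Adj F.m1 F.w := (F.nbr_m1 _).2 (by simp)
  obtain ⟨m1s, m1t⟩ := hnost F.m1 (by simp)
  have hin : D F.v F.m1 ∨ D F.w F.m1 := by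
    by_contra hc
    apply m1s
    apply hsrc
    intro u hu
    rcases (F.nbr_m1 u).1 (hadj _ _ hu).symm with rfl | rfl
    · exact hc (Or.inl hu)
    · exact hc (Or.inr hu)
  have hout : D F.m1 F.v ∨ D F.m1 F.w := by
    by_contra hc
    apply m1t
    apply hsnk
    intro u hu
    rcases (F.nbr_m1 u).1 (hadj _ _ hu) with rfl | rfl
    · exact hc (Or.inl hu)
    · exact hc (Or.inr hu)
  have o1 := hor _ _ am1v
  have o2 := hor _ _ am1w
  have o3 := hor _ _ avx
  have o4 := hor _ _ axw
  constructor
  · rintro ⟨h3, h6⟩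
    by_contra hc
    have hb : D F.w F.m1 ∧ D F.m1 F.v := by tauto
    exact hac F.v ((((T h3).tail h6).tail hb.1).tail hb.2)
  · rintro ⟨h2, h5⟩
    by_cases h3 : D F.v F.x
    · by_cases h6 : D F.x F.w
      · exact ⟨h3, h6⟩
      · have h6' : D F.w F.x := by tauto
        exact (hnt F.v F.x ⟨h3, F.m1, h2, (T h5).tail h6'⟩).elim
    · have h3' : D F.x F.v := by tauto
      by_cases h6 : D F.x F.w
      · exact (hnt F.x F.w ⟨h6, F.v, h3', (T h2).tail h5⟩).elim
      · have h6' : D F.w F.x := by tauto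
        exact (hac F.v ((((T h2).tail h5).tail h6').tail h3')).elim
end

section
/- Let G be a finite simple undirected graph containing a variable gadget V_x for vertices s and t. In any non-transitive st-orientation of G, exactly one of the two edges denoted x and x̄ of V_x is oriented exiting V_x and the other is oriented entering V_x. -/
variable {V : Type*}

/-- A variable gadget `V_x` in `G` for vertices `s` and `t`: two fork gadgets `Fx` and
`Fnx`, together with two length-4 paths `s-p1-p2-p3-t` and `s-q1-q2-q3-t`; the boundary
edge `e1` of `Fx` (resp. `Fnx`) attaches to the middle vertex `p2` (resp. `q2`), the
boundary edge `e10` of `Fnx` is identified with the boundary edge `e9` of `Fx`, and the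
remaining boundary edges `e10` of `Fx` (denoted `x`) and `e9` of `Fnx` (denoted `x̄`)
join the gadget to the rest of `G`. -/
structure VariableGadget (G : SimpleGraph V) (s t : V) where
  Fx : ForkGadget G
  Fnx : ForkGadget G
  p1 : V
  p2 : V
  p3 : V
  q1 : V
  q2 : V
  q3 : V
  attach_x : Fx.a = p2
  attach_nx : Fnx.a = q2
  ident_c : Fnx.c = Fx.w
  ident_b : Fx.b = Fnx.z
  nbr_p1 : ∀ u, G.Adj p1 u ↔ u = s ∨ u = p2
  nbr_p2 : ∀ u, G.Adj p2 u ↔ u = p1 ∨ u = p3 ∨ u = Fx.v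
  nbr_p3 : ∀ u, G.Adj p3 u ↔ u = p2 ∨ u = t
  nbr_q1 : ∀ u, G.Adj q1 u ↔ u = s ∨ u = q2
  nbr_q2 : ∀ u, G.Adj q2 u ↔ u = q1 ∨ u = q3 ∨ u = Fnx.v
  nbr_q3 : ∀ u, G.Adj q3 u ↔ u = q2 ∨ u = t
  distinct : List.Pairwise (· ≠ ·)
    [s, t, p1, p2, p3, q1, q2, q3, Fx.v, Fx.m1, Fx.m2, Fx.x, Fx.w, Fx.z,
     Fnx.v, Fnx.m1, Fnx.m2, Fnx.x, Fnx.w, Fnx.z]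
  edgeX_outside : Fx.c ∉
    [p1, p2, p3, q1, q2, q3, Fx.v, Fx.m1, Fx.m2, Fx.x, Fx.w, Fx.z,
     Fnx.v, Fnx.m1, Fnx.m2, Fnx.x, Fnx.w, Fnx.z]
  edgeNX_outside : Fnx.b ∉
    [p1, p2, p3, q1, q2, q3, Fx.v, Fx.m1, Fx.m2, Fx.x, Fx.w, Fx.z,
     Fnx.v, Fnx.m1, Fnx.m2, Fnx.x, Fnx.w, Fnx.z]


theorem fork_aux {V : Type*} (G : SimpleGraph V) (s t : V)
    (D : V → V → Prop) (hD : IsNonTransSTOrientation G D s t) (F : ForkGadget G)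
    (h : ∀ u ∈ [F.v, F.m1, F.m2, F.x, F.w, F.z], u ≠ s ∧ u ≠ t) :
    (D F.w F.b ∧ D F.z F.c) ∨ (D F.b F.w ∧ D F.c F.z) := by
  obtain ⟨⟨⟨hadj, hor⟩, hac, -, hsrc, -, hsnk⟩, htr⟩ := hD
  have hin : ∀ v, v ≠ s → ∃ u, D u v := fun v hv => by
    by_contra hc; push Not at hc; exact hv (hsrc v hc)
  have hout : ∀ v, v ≠ t → ∃ u, D v u := fun v hv => by
    by_contra hc; push Not at hc; exact hv (hsnk v hc)
  have c4 : ∀ a b c d, D a b → D b c → D c d → D d a → False := fun a b c d h1 h2 h3 h4 =>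
    hac a (((Relation.TransGen.single h1).tail h2).tail h3 |>.tail h4)
  have t4 : ∀ a b c d, D a b → D b c → D c d → D a d → False := fun a b c d h1 h2 h3 h4 =>
    htr a d ⟨h4, b, h1, (Relation.TransGen.single h2).tail h3⟩
  have as : ∀ u v, D u v → ¬ D v u := fun u v huv => (hor u v (hadj u v huv)).1 huv
  have tot : ∀ u v, G.Adj u v → D u v ∨ D v u := fun u v huv => by
    have := hor u v huv; tauto
  -- degree-two vertices are passed through
  have pass : ∀ m p q, m ≠ s → m ≠ t → (∀ u, G.Adj m u ↔ u = p ∨ u = q) →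
      (D p m ∧ D m q) ∨ (D q m ∧ D m p) := by
    intro m p q h1 h2 hn
    obtain ⟨u, hu⟩ := hin m h1
    obtain ⟨u', hu'⟩ := hout m h2
    have e1 := (hn u).1 (hadj _ _ hu).symm
    have e2 := (hn u').1 (hadj _ _ hu')
    have := as _ _ hu
    rcases e1 with rfl | rfl <;> rcases e2 with rfl | rfl <;> tauto
  revert h
  obtain ⟨a, v, m1, m2, x, w, z, b, c, dist, -, -, -, nv, n1, n2, nx, nw, nz⟩ := F
  intro h
  simp only [List.mem_cons, List.not_mem_nil, or_false, forall_eq_or_imp, forall_eq] at h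
  obtain ⟨hv, hm1, hm2, hx, hw, hz⟩ := h
  have p1 := pass m1 v w hm1.1 hm1.2 n1
  have p2 := pass m2 v z hm2.1 hm2.2 n2
  have ev := tot x v ((nx v).2 (by simp))
  have ew := tot x w ((nx w).2 (by simp))
  have ez := tot x z ((nx z).2 (by simp))
  have eb := tot w b ((nw b).2 (by simp))
  have ec := tot z c ((nz c).2 (by simp))
  have key : ∀ m y, (D v m ∧ D m y) ∨ (D y m ∧ D m v) → (D x y ∨ D y x) →
      (D v m ∧ D m y ∧ D v x ∧ D x y) ∨ (D y m ∧ D m v ∧ D y x ∧ D x v) := by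
    intro m y hp hy
    rcases hp with ⟨h1, h2⟩ | ⟨h1, h2⟩ <;> rcases ev with h3 | h3 <;> rcases hy with h4 | h4
    · exact (t4 x v m y h3 h1 h2 h4).elim
    · exact (c4 v m y x h1 h2 h4 h3).elim
    · exact Or.inl ⟨h1, h2, h3, h4⟩
    · exact (t4 v m y x h1 h2 h4 h3).elim
    · exact (t4 x y m v h4 h1 h2 h3).elim
    · exact Or.inr ⟨h1, h2, h4, h3⟩
    · exact (c4 y m v x h1 h2 h3 h4).elim
    · exact (t4 y m v x h1 h2 h3 h4).elim
  have k1 := key m1 w p1 ew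
  have k2 := key m2 z p2 ez
  have asv := as v x
  rcases k1 with ⟨g1, g2, g3, g4⟩ | ⟨g1, g2, g3, g4⟩ <;>
    rcases k2 with ⟨l1, l2, l3, l4⟩ | ⟨l1, l2, l3, l4⟩
  · left
    obtain ⟨u, hu⟩ := hout w hw.2
    obtain ⟨u', hu'⟩ := hout z hz.2
    have e1 := (nw u).1 (hadj _ _ hu)
    have e2 := (nz u').1 (hadj _ _ hu')
    constructor
    · rcases e1 with rfl | rfl | rfl
      · exact absurd hu (as _ _ g2)
      · exact absurd hu (as _ _ g4)
      · exact hu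
    · rcases e2 with rfl | rfl | rfl
      · exact absurd hu' (as _ _ l2)
      · exact absurd hu' (as _ _ l4)
      · exact hu'
  · exact absurd l4 (asv g3)
  · exact absurd g4 (asv l3)
  · right
    obtain ⟨u, hu⟩ := hin w hw.1
    obtain ⟨u', hu'⟩ := hin z hz.1
    have e1 := (nw u).1 (hadj _ _ hu).symm
    have e2 := (nz u').1 (hadj _ _ hu').symm
    constructor
    · rcases e1 with rfl | rfl | rfl
      · exact absurd hu (as _ _ g1)
      · exact absurd hu (as _ _ g3)
      · exact hu
    · rcases e2 with rfl | rfl | rfl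
      · exact absurd hu' (as _ _ l1)
      · exact absurd hu' (as _ _ l3)
      · exact hu'

/-- In any non-transitive st-orientation of a graph containing a variable gadget, exactly
one of the edges `x = {Fx.z, Fx.c}` and `x̄ = {Fnx.w, Fnx.b}` exits the gadget and the
other enters it. -/
theorem stmt7 {V : Type*} (G : SimpleGraph V) (s t : V) (hst : s ≠ t)
    (D : V → V → Prop) (hD : IsNonTransSTOrientation G D s t)
    (VG : VariableGadget G s t) :
    (D VG.Fx.z VG.Fx.c ∧ D VG.Fnx.b VG.Fnx.w) ∨
    (D VG.Fx.c VG.Fx.z ∧ D VG.Fnx.w VG.Fnx.b) := by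
  have as : ∀ u v, D u v → ¬ D v u := fun u v huv =>
    (hD.1.1.2 u v (hD.1.1.1 u v huv)).1 huv
  have hd := VG.distinct
  simp only [List.pairwise_cons, List.mem_cons, List.not_mem_nil, or_false] at hd
  obtain ⟨d1, d2, -⟩ := hd
  have h1 := fork_aux G s t D hD VG.Fx (by
    intro u hu
    simp only [List.mem_cons, List.not_mem_nil, or_false] at hu
    exact ⟨(d1 u (by tauto)).symm, (d2 u (by tauto)).symm⟩)
  have h2 := fork_aux G s t D hD VG.Fnx (by
    intro u hu
    simp only [List.mem_cons, List.not_mem_nil, or_false] at hu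
    exact ⟨(d1 u (by tauto)).symm, (d2 u (by tauto)).symm⟩)
  rw [VG.ident_b] at h1
  rw [VG.ident_c] at h2
  have := as VG.Fx.w VG.Fnx.z
  tauto
end

section
/- Consider the variable gadget V_x as a graph on its own vertices together with the two outside endpoints of its edges x and x̄, with the following orientation (the 'true orientation'): the paths P_x and P_x̄ are both directed from s to t; the fork F_x carries the forced orientation (its boundary edge e1 directed from the middle vertex of P_x into F_x, and in particular the shared edge directed from the w-vertex of F_x into the z-vertex of F_x̄, and the edge x directed exiting V_x); and the fork F_x̄ carries the reverse of the forced orientation (every edge of F_x̄ reversed, so its boundary edge e1 is directed from F_x̄ into the middle vertex of P_x̄ and the edge x̄ is directed entering V_x). Then this digraph is acyclic. -/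
variable {V : Type*}

/-- The directed edges of the variable gadget in its `true` orientation.
Vertices: `s=0, t=1`; path `P_x`: `0-2-3-4-1`; path `P_x̄`: `0-5-6-7-1`;
fork `F_x`: `v=8, m1=9, m2=10, x=11, w=12, z=13` with the forced orientation
(`e1` directed from the middle vertex `3` of `P_x` into the fork, the shared edge
directed from `w=12` into the `z`-vertex `19` of `F_x̄`, and the edge `x` directed
from `z=13` out to `20`); fork `F_x̄`: `v=14, m1=15, m2=16, x=17, w=18, z=19`
with the reverse of the forced orientation (`e1` directed from `14` into the middle
vertex `6` of `P_x̄`, and the edge `x̄` directed from the outside vertex `21` into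
`w=18`). -/
def variableGadgetTrueD (u v : Fin 22) : Prop :=
  (u, v) ∈ ([(0, 2), (2, 3), (3, 4), (4, 1),
             (0, 5), (5, 6), (6, 7), (7, 1),
             (3, 8), (8, 9), (9, 12), (8, 11), (11, 12), (8, 10), (10, 13),
             (11, 13), (12, 19), (13, 20),
             (14, 6), (15, 14), (18, 15), (17, 14), (18, 17), (16, 14),
             (19, 16), (19, 17), (21, 18)] : List (Fin 22 × Fin 22))

/-- The variable gadget, in its `true` orientation, is acyclic. -/
theorem stmt8 : DigraphAcyclic variableGadgetTrueD := by
  intro v h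
  let r : Fin 22 → ℕ := ![0, 11, 1, 2, 3, 1, 9, 10, 3, 4, 4, 4, 5, 5, 8, 2, 7, 7, 1, 6, 6, 0]
  have step : ∀ a b, variableGadgetTrueD a b → r a < r b := by
    intro a b hab
    have key : ∀ p ∈ ([(0, 2), (2, 3), (3, 4), (4, 1),
             (0, 5), (5, 6), (6, 7), (7, 1),
             (3, 8), (8, 9), (9, 12), (8, 11), (11, 12), (8, 10), (10, 13),
             (11, 13), (12, 19), (13, 20),
             (14, 6), (15, 14), (18, 15), (17, 14), (18, 17), (16, 14),
             (19, 16), (19, 17), (21, 18)] : List (Fin 22 × Fin 22)), r p.1 < r p.2 := by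
      set_option maxRecDepth 100000 in decide
    exact key (a, b) hab
  have mono : ∀ a b, Relation.TransGen variableGadgetTrueD a b → r a < r b := by
    intro a b hab
    induction hab with
    | single h => exact step _ _ h
    | tail _ h ih => exact ih.trans (step _ _ h)
  exact lt_irrefl _ (mono v v h)
end

section
/- Let G* be a finite simple undirected graph with distinct vertices s* and t*, and let G+ be the graph obtained from G* by adding two new vertices s+ and t+ together with the edges {s+, s*} and {t+, t*}. Then for any distinct vertices s and t of G+, if G+ admits an st-orientation, then {s, t} = {s+, t+}. -/
variable {V : Type*}

/-- The graph `G⁺` obtained from `Gstar` by adding two new vertices `s⁺ := Sum.inr false`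
and `t⁺ := Sum.inr true`, together with the edges `{s⁺, s*}` and `{t⁺, t*}`. -/
def graphPlus (Gstar : SimpleGraph V) (sstar tstar : V) : SimpleGraph (V ⊕ Bool) :=
  SimpleGraph.fromRel fun x y =>
    (∃ u w, x = Sum.inl u ∧ y = Sum.inl w ∧ Gstar.Adj u w) ∨
    (x = Sum.inr false ∧ y = Sum.inl sstar) ∨
    (x = Sum.inr true ∧ y = Sum.inl tstar)

/-- If `G⁺` admits an st-orientation for distinct vertices `s`, `t`, then
`{s, t} = {s⁺, t⁺}`. -/
theorem stmt11 {V : Type*} (Gstar : SimpleGraph V) (sstar tstar : V)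
    (hstar : sstar ≠ tstar) (s t : V ⊕ Bool) (hst : s ≠ t)
    (D : (V ⊕ Bool) → (V ⊕ Bool) → Prop)
    (hD : IsSTOrientation (graphPlus Gstar sstar tstar) D s t) :
    (s = Sum.inr false ∧ t = Sum.inr true) ∨
    (s = Sum.inr true ∧ t = Sum.inr false) := by
  obtain ⟨⟨h1, h2⟩, -, -, hs, -, ht⟩ := hD
  have key : ∀ b : Bool, (Sum.inr b : V ⊕ Bool) = s ∨ (Sum.inr b : V ⊕ Bool) = t := by
    intro b
    have hadj : ∀ y, (graphPlus Gstar sstar tstar).Adj (Sum.inr b) y →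
        y = Sum.inl (if b then tstar else sstar) := by
      intro y hy
      cases b <;> simp [graphPlus] at hy ⊢ <;> exact hy.2
    by_cases h : D (Sum.inr b) (Sum.inl (if b then tstar else sstar))
    · left
      apply hs
      intro u hu
      have hu' := h1 _ _ hu
      have e := hadj u hu'.symm
      subst e
      exact (h2 _ _ hu').1 hu h
    · right
      apply ht
      intro u hu
      have e := hadj u (h1 _ _ hu)
      subst e
      exact h hu
  rcases key false with h | h <;> rcases key true with h' | h'
  · exact absurd (h.trans h'.symm) (by simp)
  · exact Or.inl ⟨h.symm, h'.symm⟩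
  · exact Or.inr ⟨h'.symm, h.symm⟩
  · exact absurd (h.trans h'.symm) (by simp)
end
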